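/- The triangle group T(2,3,3) is isomorphic (as a group) to the alternating group A_4, the alternating group on a four-element set. -/

import Mathlib

/-- Relator set of the triangle group `T(a,b,c)`: the relators `x^a`, `y^b`, `z^c`
and `x·y·z` in the free group on three generators `x, y, z`. -/
def TriangleRels (a b c : ℕ) : Set (FreeGroup (Fin 3)) :=
  {FreeGroup.of 0 ^ a, FreeGroup.of 1 ^ b, FreeGroup.of 2 ^ c,
    FreeGroup.of 0 * FreeGroup.of 1 * FreeGroup.of 2}

/-- The triangle group `T(a,b,c)`. -/
abbrev TriangleGroup (a b c : ℕ) : Type :=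
  PresentedGroup (TriangleRels a b c)

/-!
Let `x` and `y` generate a group and satisfy `x² = 1` and `(xy)³ = y³`. Expanding the second
relation, the product of the conjugates of `x` by `1`, `y` and `y²` is `1`. Being involutions, `x`
and `y x y⁻¹` therefore commute, and the subgroup `⟨x⟩⟨y x y⁻¹⟩`, of order at most `4`, is
normalized by `y`. So the group is `⟨x⟩⟨y x y⁻¹⟩⟨y⟩`, and if also `y³ = 1` it has at most `12`
elements. On the other hand `A₄` has `12` elements and, having no subgroup of index `2`, is
generated by any two elements of orders `2` and `3`.
-/

open Subgroup
open scoped Pointwise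

section GeneratedByPair

variable {G : Type*} [Group G] {x y : G}

lemma conj_conj_eq_inv_mul_conj (h : (x * y) ^ 3 = y ^ 3) :
    y * (y * x * y⁻¹) * y⁻¹ = (x * (y * x * y⁻¹))⁻¹ := by
  refine eq_inv_of_mul_eq_one_right ?_
  calc x * (y * x * y⁻¹) * (y * (y * x * y⁻¹) * y⁻¹)
      = (x * y) ^ 3 * (y ^ 3)⁻¹ := by simp only [pow_succ, pow_zero]; group
    _ = 1 := by rw [h, mul_inv_cancel]

lemma commute_conj_of_sq_eq_one (hx : x ^ 2 = 1) (h : (x * y) ^ 3 = y ^ 3) :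
    Commute x (y * x * y⁻¹) := by
  have inv_x : x⁻¹ = x := inv_eq_of_mul_eq_one_left (by rw [← sq, hx])
  have inv_conj : (y * x * y⁻¹)⁻¹ = y * x * y⁻¹ := by rw [conj_inv, inv_x]
  have inv_mul : (x * (y * x * y⁻¹))⁻¹ = x * (y * x * y⁻¹) := by
    rw [← inv_inj, ← conj_conj_eq_inv_mul_conj h, conj_inv, inv_conj]
  calc x * (y * x * y⁻¹) = (y * x * y⁻¹)⁻¹ * x⁻¹ := by rw [← mul_inv_rev, inv_mul]
    _ = y * x * y⁻¹ * x := by rw [inv_conj, inv_x]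

lemma map_conj_zpowers (x y : G) :
    (zpowers x).map (MulAut.conj y).toMonoidHom = zpowers (y * x * y⁻¹) :=
  MonoidHom.map_zpowers _ x

lemma zpowers_sup_zpowers_mul (x y : G) :
    zpowers y ⊔ zpowers (x * y) = zpowers x ⊔ zpowers y := by
  have mem_left {a b : G} : a ∈ zpowers a ⊔ zpowers b := mem_sup_left (mem_zpowers a)
  have mem_right {a b : G} : b ∈ zpowers a ⊔ zpowers b := mem_sup_right (mem_zpowers b)
  apply le_antisymm <;> rw [sup_le_iff, zpowers_le, zpowers_le]
  · exact ⟨mem_right, mul_mem mem_left mem_right⟩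
  · exact ⟨(mul_mem_cancel_right mem_left).mp mem_right, mem_left⟩

lemma mem_normalizer_zpowers_sup_zpowers_conj (h : (x * y) ^ 3 = y ^ 3) :
    y ∈ normalizer (zpowers x ⊔ zpowers (y * x * y⁻¹) : Subgroup G) := by
  rw [mem_normalizer_iff_map_conj_eq]
  calc (zpowers x ⊔ zpowers (y * x * y⁻¹)).map (MulAut.conj y).toMonoidHom
      = zpowers (y * x * y⁻¹) ⊔ zpowers (x * (y * x * y⁻¹)) := by
        rw [Subgroup.map_sup, map_conj_zpowers, map_conj_zpowers, conj_conj_eq_inv_mul_conj h,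
          zpowers_inv]
    _ = zpowers x ⊔ zpowers (y * x * y⁻¹) := zpowers_sup_zpowers_mul ..

lemma coe_zpowers_sup_zpowers_of_commute (h : Commute x y) :
    ((zpowers x ⊔ zpowers y : Subgroup G) : Set G) = (zpowers x : Set G) * zpowers y := by
  refine coe_mul_of_right_le_normalizer_left _ _ ?_
  rw [zpowers_le, mem_normalizer_iff_map_conj_eq]
  exact (map_conj_zpowers x y).trans (by rw [h.symm.eq, mul_inv_cancel_right])

lemma closure_pair_eq_sup (x y : G) :
    closure {x, y} = zpowers x ⊔ zpowers (y * x * y⁻¹) ⊔ zpowers y := by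
  have hx : x ∈ closure {x, y} := subset_closure (Set.mem_insert x {y})
  have hy : y ∈ closure {x, y} := subset_closure (Set.mem_insert_of_mem x rfl)
  apply le_antisymm
  · rw [closure_le, Set.insert_subset_iff, Set.singleton_subset_iff]
    exact ⟨mem_sup_left (mem_sup_left (mem_zpowers x)), mem_sup_right (mem_zpowers y)⟩
  · simp only [sup_le_iff, zpowers_le]
    exact ⟨⟨hx, mul_mem (mul_mem hy hx) (inv_mem hy)⟩, hy⟩

theorem coe_closure_pair_eq_mul_zpowers (hx : x ^ 2 = 1) (h : (x * y) ^ 3 = y ^ 3) :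
    (closure {x, y} : Set G) = (zpowers x : Set G) * zpowers (y * x * y⁻¹) * zpowers y := by
  rw [closure_pair_eq_sup, coe_mul_of_right_le_normalizer_left _ _
      (zpowers_le.mpr (mem_normalizer_zpowers_sup_zpowers_conj h)),
    coe_zpowers_sup_zpowers_of_commute (commute_conj_of_sq_eq_one hx h)]

theorem finite_closure_pair (hx : x ^ 2 = 1) (hy : IsOfFinOrder y) (h : (x * y) ^ 3 = y ^ 3) :
    Finite (closure {x, y}) := by
  have fin_x : IsOfFinOrder x := isOfFinOrder_iff_pow_eq_one.mpr ⟨2, two_pos, hx⟩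
  have fin_conj : IsOfFinOrder (y * x * y⁻¹) :=
    MonoidHom.isOfFinOrder (MulAut.conj y).toMonoidHom fin_x
  refine Set.finite_coe_iff.mpr ?_
  rw [coe_closure_pair_eq_mul_zpowers hx h]
  exact ((finite_zpowers.mpr fin_x).mul (finite_zpowers.mpr fin_conj)).mul (finite_zpowers.mpr hy)

theorem card_closure_pair_le (hx : x ^ 2 = 1) (h : (x * y) ^ 3 = y ^ 3) :
    Nat.card (closure {x, y}) ≤ 4 * orderOf y := by
  have card_x : orderOf x ≤ 2 := orderOf_le_of_pow_eq_one two_pos hx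
  have card_conj : orderOf (y * x * y⁻¹) ≤ 2 :=
    orderOf_le_of_pow_eq_one two_pos (by rw [conj_pow, hx, mul_one, mul_inv_cancel])
  calc Nat.card (closure {x, y})
      = Nat.card ↥((zpowers x : Set G) * zpowers (y * x * y⁻¹) * zpowers y) := by
        rw [← coe_closure_pair_eq_mul_zpowers hx h]; rfl
    _ ≤ orderOf x * orderOf (y * x * y⁻¹) * orderOf y := by
        simp only [← Nat.card_zpowers]
        exact Set.natCard_mul_le.trans (Nat.mul_le_mul_right _ Set.natCard_mul_le)
    _ ≤ 2 * 2 * orderOf y := by gcongr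

end GeneratedByPair

section AlternatingGroup

variable {α : Type*} [Fintype α] [DecidableEq α]

lemma index_ne_two_of_subgroup_alternatingGroup (H : Subgroup (alternatingGroup α)) :
    H.index ≠ 2 := by
  intro hH
  have three_cycle_mem {g : alternatingGroup α} (hg : (g : Equiv.Perm α).IsThreeCycle) :
      g ∈ H := by
    have sq_sq_eq : (g ^ 2) ^ 2 = g := by
      rw [← pow_mul, pow_succ, ← hg.orderOf, orderOf_coe, pow_orderOf_eq_one, one_mul]
    exact sq_sq_eq ▸ sq_mem_of_index_two hH (g ^ 2)
  have H_eq_top : H = ⊤ := by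
    rw [eq_top_iff, ← alternatingGroup.closure_isThreeCycles_eq_top, closure_le]
    exact fun _ ↦ three_cycle_mem
  simp [H_eq_top] at hH

theorem closure_pair_eq_top_of_orderOf_eq_two_three (hα : Nat.card α = 4)
    {x y : alternatingGroup α} (hx : orderOf x = 2) (hy : orderOf y = 3) :
    closure {x, y} = ⊤ := by
  set H := closure {x, y}
  have two_dvd : 2 ∣ Nat.card H :=
    hx ▸ H.orderOf_dvd_natCard (subset_closure (Set.mem_insert x {y}))
  have three_dvd : 3 ∣ Nat.card H :=
    hy ▸ H.orderOf_dvd_natCard (subset_closure (Set.mem_insert_of_mem x rfl))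
  obtain ⟨k, hk⟩ : 6 ∣ Nat.card H :=
    Nat.Coprime.mul_dvd_of_dvd_of_dvd (by norm_num) two_dvd three_dvd
  have index_dvd : H.index ∣ 2 := by
    have card_mul : Nat.card H * H.index = 12 := by
      rw [card_mul_index, alternatingGroup.card_of_card_eq_four hα]
    exact ⟨k, by grind⟩
  exact index_eq_one.mp (((Nat.dvd_prime Nat.prime_two).mp index_dvd).resolve_right
    (index_ne_two_of_subgroup_alternatingGroup H))

end AlternatingGroup

namespace TriangleGroup

variable {a b c : ℕ}

lemma of_zero_pow : (PresentedGroup.of 0 : TriangleGroup a b c) ^ a = 1 :=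
  PresentedGroup.one_of_mem (rels := TriangleRels a b c) (x := FreeGroup.of 0 ^ a)
    (by simp [TriangleRels])

lemma of_one_pow : (PresentedGroup.of 1 : TriangleGroup a b c) ^ b = 1 :=
  PresentedGroup.one_of_mem (rels := TriangleRels a b c) (x := FreeGroup.of 1 ^ b)
    (by simp [TriangleRels])

lemma of_two_pow : (PresentedGroup.of 2 : TriangleGroup a b c) ^ c = 1 :=
  PresentedGroup.one_of_mem (rels := TriangleRels a b c) (x := FreeGroup.of 2 ^ c)
    (by simp [TriangleRels])

lemma of_zero_mul_of_one :
    (PresentedGroup.of 0 * PresentedGroup.of 1 : TriangleGroup a b c) =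
      (PresentedGroup.of 2)⁻¹ :=
  eq_inv_of_mul_eq_one_left <| PresentedGroup.one_of_mem (rels := TriangleRels a b c)
    (x := FreeGroup.of 0 * FreeGroup.of 1 * FreeGroup.of 2) (by simp [TriangleRels])

lemma of_zero_mul_of_one_pow :
    (PresentedGroup.of 0 * PresentedGroup.of 1 : TriangleGroup a b c) ^ c = 1 := by
  rw [of_zero_mul_of_one, inv_pow, of_two_pow, inv_one]

lemma closure_of_zero_of_one :
    closure {(PresentedGroup.of 0 : TriangleGroup a b c), PresentedGroup.of 1} = ⊤ := by
  set H := closure {(PresentedGroup.of 0 : TriangleGroup a b c), PresentedGroup.of 1}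
  have mem_zero : PresentedGroup.of 0 ∈ H := subset_closure (Set.mem_insert _ _)
  have mem_one : PresentedGroup.of 1 ∈ H := subset_closure (Set.mem_insert_of_mem _ rfl)
  have mem_two : PresentedGroup.of 2 ∈ H :=
    inv_mem_iff.mp (of_zero_mul_of_one (a := a) (b := b) (c := c) ▸ mul_mem mem_zero mem_one)
  refine (eq_top_iff' H).mpr (PresentedGroup.generated_by _ H fun i ↦ ?_)
  fin_cases i
  exacts [mem_zero, mem_one, mem_two]

section Lift

variable {G : Type*} [Group G] {x y : G}

/-- The homomorphism from `T(a,b,c)` sending the first two generators to `x` and `y`, and hence the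
third to `(x * y)⁻¹`. -/
def lift (hx : x ^ a = 1) (hy : y ^ b = 1) (hxy : (x * y) ^ c = 1) : TriangleGroup a b c →* G :=
  PresentedGroup.toGroup (f := ![x, y, (x * y)⁻¹]) <| by
    rintro r (rfl | rfl | rfl | rfl)
    · simpa using hx
    · simpa using hy
    · simpa only [map_pow, FreeGroup.lift_apply_of, Matrix.cons_val, inv_pow, inv_eq_one] using hxy
    · simp

variable (hx : x ^ a = 1) (hy : y ^ b = 1) (hxy : (x * y) ^ c = 1)

lemma lift_of_zero : lift hx hy hxy (PresentedGroup.of 0) = x :=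
  PresentedGroup.toGroup.of _

lemma lift_of_one : lift hx hy hxy (PresentedGroup.of 1) = y :=
  PresentedGroup.toGroup.of _

lemma lift_surjective (hG : closure {x, y} = ⊤) : Function.Surjective (lift hx hy hxy) := by
  rw [← MonoidHom.range_eq_top, eq_top_iff, ← hG, closure_le, Set.insert_subset_iff,
    Set.singleton_subset_iff]
  exact ⟨⟨_, lift_of_zero hx hy hxy⟩, ⟨_, lift_of_one hx hy hxy⟩⟩

end Lift

lemma of_zero_mul_of_one_pow_three :
    (PresentedGroup.of 0 * PresentedGroup.of 1 : TriangleGroup 2 3 3) ^ 3 =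
      PresentedGroup.of 1 ^ 3 := by
  rw [of_zero_mul_of_one_pow, of_one_pow]

instance finite_two_three_three : Finite (TriangleGroup 2 3 3) := by
  have fin_one : IsOfFinOrder (PresentedGroup.of 1 : TriangleGroup 2 3 3) :=
    isOfFinOrder_iff_pow_eq_one.mpr ⟨3, three_pos, of_one_pow⟩
  have := finite_closure_pair of_zero_pow fin_one of_zero_mul_of_one_pow_three
  rw [closure_of_zero_of_one] at this
  exact Finite.of_equiv _ topEquiv.toEquiv

theorem card_two_three_three_le : Nat.card (TriangleGroup 2 3 3) ≤ 12 := by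
  have card_closure := card_closure_pair_le of_zero_pow of_zero_mul_of_one_pow_three
  have order_le : orderOf (PresentedGroup.of 1 : TriangleGroup 2 3 3) ≤ 3 :=
    orderOf_le_of_pow_eq_one three_pos of_one_pow
  rw [closure_of_zero_of_one, card_top] at card_closure
  lia

end TriangleGroup

/-- The triangle group `T(2,3,3)` is isomorphic to the alternating group `A₄`. -/
theorem triangleGroup_two_three_three_iso_A4 :
    Nonempty (TriangleGroup 2 3 3 ≃* alternatingGroup (Fin 4)) := by
  let x : alternatingGroup (Fin 4) :=
    ⟨Equiv.swap 0 1 * Equiv.swap 2 3, Equiv.Perm.mem_alternatingGroup.mpr (by decide)⟩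
  let y : alternatingGroup (Fin 4) :=
    ⟨Equiv.swap 0 1 * Equiv.swap 1 2, Equiv.Perm.mem_alternatingGroup.mpr (by decide)⟩
  have hx : x ^ 2 = 1 := by decide
  have hy : y ^ 3 = 1 := by decide
  have hxy : (x * y) ^ 3 = 1 := by decide
  have card_fin_four : Nat.card (Fin 4) = 4 := Nat.card_fin 4
  have generate : closure {x, y} = ⊤ := closure_pair_eq_top_of_orderOf_eq_two_three card_fin_four
    (orderOf_eq_prime hx (by decide)) (orderOf_eq_prime hy (by decide))
  have card_le : Nat.card (TriangleGroup 2 3 3) ≤ Nat.card (alternatingGroup (Fin 4)) :=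
    TriangleGroup.card_two_three_three_le.trans_eq
      (alternatingGroup.card_of_card_eq_four card_fin_four).symm
  exact ⟨.ofBijective (TriangleGroup.lift hx hy hxy)
    ((TriangleGroup.lift_surjective hx hy hxy generate).bijective_of_nat_card_le card_le)⟩
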